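/- Let μ ≥ 0 and λ ≥ 1 be real and let f belong to the class S*_{Σ,q}^η(μ,λ;φ). Then Ω·a₂² = (1/2)·(E₂ − E₁)·c₁² + (1/2)·E₁·(c₂ + d₂) and Θ·a₂² = (1/2)·E₁³·(c₂ + d₂). -/

import Mathlib

open Complex Metric Set

noncomputable def symQ (q x : ℝ) : ℝ := (Real.rpow q x - Real.rpow q (-x)) / (q - q⁻¹)

noncomputable def Dq (q : ℝ) (f : ℂ → ℂ) (z : ℂ) : ℂ :=
  if z = 0 then deriv f 0
  else (f ((q : ℂ) * z) - f (z / (q : ℂ))) / (((q : ℂ) - (q : ℂ)⁻¹) * z)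

def IsSchwarz (u : ℂ → ℂ) : Prop :=
  AnalyticOnNhd ℂ u (ball 0 1) ∧ u 0 = 0 ∧ ∀ z ∈ ball (0 : ℂ) 1, u z ∈ ball (0 : ℂ) 1

noncomputable def taylorCoeff (h : ℂ → ℂ) (n : ℕ) : ℂ := iteratedDeriv n h 0 / (n.factorial : ℂ)

noncomputable def Lcoef (q η : ℝ) (n : ℕ) : ℝ := symQ q (1 + η) / symQ q ((n : ℝ) + η)

noncomputable def Jop (q η : ℝ) (h : ℂ → ℂ) (z : ℂ) : ℂ :=
  ∑' n, (Lcoef q η n : ℂ) * taylorCoeff h n * z ^ n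

noncomputable def Phi (q η lam mu : ℝ) (h : ℂ → ℂ) (z : ℂ) : ℂ :=
  (2 * z * Dq q (Jop q η h) z ^ (lam : ℂ) / (Jop q η h z - Jop q η h (-z))) ^ (mu : ℂ) *
    (2 * Dq q (fun ζ => ζ * Dq q (Jop q η h) ζ) z ^ (lam : ℂ) /
        Dq q (fun ζ => Jop q η h ζ - Jop q η h (-ζ)) z) ^ ((1 - mu : ℝ) : ℂ)

noncomputable def M2v (q mu : ℝ) : ℝ := mu - (mu - 1) * symQ q 2
noncomputable def M3v (q mu : ℝ) : ℝ := mu - (mu - 1) * symQ q 3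
noncomputable def N2v (q mu : ℝ) : ℝ := mu - (mu - 1) * symQ q 2 ^ 2

noncomputable def Omegav (q η lam mu : ℝ) : ℝ :=
  2 * (lam * symQ q 3 - 1) * M3v q mu * Lcoef q η 3 +
    lam * (lam * M2v q mu ^ 2 - N2v q mu) * symQ q 2 ^ 2 * Lcoef q η 2 ^ 2

noncomputable def Thetav (q η lam mu E1 : ℝ) (E : ℕ → ℂ) : ℂ :=
  ((2 * (lam * symQ q 3 - 1) * M3v q mu * E1 ^ 2 * Lcoef q η 3 : ℝ) : ℂ) +
    (lam : ℂ) * (((lam * M2v q mu ^ 2 : ℝ) : ℂ) * (((E1 ^ 2 + 2 * E1 : ℝ) : ℂ) - 2 * E 2) -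
        ((N2v q mu * E1 ^ 2 : ℝ) : ℂ)) * ((symQ q 2 ^ 2 * Lcoef q η 2 ^ 2 : ℝ) : ℂ)

noncomputable def Gammav (q η lam : ℝ) : ℝ :=
  2 * (lam * symQ q 3 - 1) * Lcoef q η 3 + lam * (lam - 1) * symQ q 2 ^ 2 * Lcoef q η 2 ^ 2

noncomputable def Xiv (q η lam E1 : ℝ) (E : ℕ → ℂ) : ℂ :=
  ((2 * (lam * symQ q 3 - 1) * E1 ^ 2 * Lcoef q η 3 : ℝ) : ℂ) +
    (lam : ℂ) * ((((lam - 1) * E1 ^ 2 : ℝ) : ℂ) + 2 * (lam : ℂ) * ((E1 : ℂ) - E 2)) *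
      ((symQ q 2 ^ 2 * Lcoef q η 2 ^ 2 : ℝ) : ℂ)

noncomputable def Psiv (q η lam : ℝ) : ℝ :=
  2 * (lam * symQ q 3 - 1) * symQ q 3 * Lcoef q η 3 +
    lam * (lam - 1) * symQ q 2 ^ 4 * Lcoef q η 2 ^ 2

noncomputable def Upsv (q η lam E1 : ℝ) (E : ℕ → ℂ) : ℂ :=
  ((2 * (lam * symQ q 3 - 1) * symQ q 3 * E1 ^ 2 * Lcoef q η 3 : ℝ) : ℂ) +
    (lam : ℂ) * ((((lam - 1) * E1 ^ 2 : ℝ) : ℂ) + 2 * (lam : ℂ) * ((E1 : ℂ) - E 2)) *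
      ((symQ q 2 ^ 4 * Lcoef q η 2 ^ 2 : ℝ) : ℂ)

open Filter Topology in
def Tay (l : Filter ℂ) (h : ℂ → ℂ) (a b c : ℂ) : Prop :=
  ∃ k : ℂ → ℂ, Tendsto k l (𝓝 0) ∧ ∀ᶠ z in l, h z = a + b * z + c * z ^ 2 + z ^ 2 * k z

namespace Tay

open Filter Topology

variable {l : Filter ℂ} {h h' : ℂ → ℂ} {a b c a' b' c' : ℂ}

theorem congr (H : Tay l h a b c) (e : ∀ᶠ z in l, h' z = h z) : Tay l h' a b c := by
  obtain ⟨k, hk, hh⟩ := H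
  exact ⟨k, hk, by filter_upwards [hh, e] with z h1 h2; rw [h2, h1]⟩

theorem mono {l' : Filter ℂ} (H : Tay l h a b c) (hl : l' ≤ l) : Tay l' h a b c := by
  obtain ⟨k, hk, hh⟩ := H
  exact ⟨k, hk.mono_left hl, hh.filter_mono hl⟩

theorem coe (H : Tay l h a b c) (ea : a' = a) (eb : b' = b) (ec : c' = c) :
    Tay l h a' b' c' := by subst ea eb ec; exact H

theorem poly (l : Filter ℂ) (a b c : ℂ) : Tay l (fun z => a + b * z + c * z ^ 2) a b c :=
  ⟨fun _ => 0, tendsto_const_nhds, by simp⟩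

theorem const (l : Filter ℂ) (a : ℂ) : Tay l (fun _ => a) a 0 0 :=
  (poly l a 0 0).congr (by simp)

theorem lin (l : Filter ℂ) (a : ℂ) : Tay l (fun z => a * z) 0 a 0 :=
  (poly l 0 a 0).congr (by simp)

theorem add (H : Tay l h a b c) (H' : Tay l h' a' b' c') :
    Tay l (fun z => h z + h' z) (a + a') (b + b') (c + c') := by
  obtain ⟨k, hk, hh⟩ := H
  obtain ⟨k', hk', hh'⟩ := H'
  refine ⟨fun z => k z + k' z, by simpa using hk.add hk', ?_⟩
  filter_upwards [hh, hh'] with z h1 h2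
  rw [h1, h2]; ring

theorem mul (hl : l ≤ 𝓝 0) (H : Tay l h a b c) (H' : Tay l h' a' b' c') :
    Tay l (fun z => h z * h' z) (a * a') (a * b' + b * a') (a * c' + b * b' + c * a') := by
  obtain ⟨k, hk, hh⟩ := H
  obtain ⟨k', hk', hh'⟩ := H'
  have hz : Tendsto (fun z : ℂ => z) l (𝓝 0) := hl
  refine ⟨fun z => (b * c' + c * b') * z + c * c' * z ^ 2 + (a + b * z + c * z ^ 2) * k' z
    + (a' + b' * z + c' * z ^ 2) * k z + z ^ 2 * k z * k' z, ?_, ?_⟩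
  · have h1 : ∀ x y w : ℂ, Tendsto (fun z : ℂ => x + y * z + w * z ^ 2) l (𝓝 x) := by
      intro x y w
      simpa using ((tendsto_const_nhds (x := x)).add (hz.const_mul y)).add ((hz.pow 2).const_mul w)
    have := ((((h1 0 (b * c' + c * b') (c * c')).add ((h1 a b c).mul hk')).add
      ((h1 a' b' c').mul hk)).add (((h1 0 0 1).mul hk).mul hk'))
    simpa using this
  · filter_upwards [hh, hh'] with z h1 h2
    rw [h1, h2]; ring

theorem smul (hl : l ≤ 𝓝 0) (H : Tay l h a b c) (s : ℂ) :
    Tay l (fun z => s * h z) (s * a) (s * b) (s * c) :=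
  ((const l s).mul hl H).coe (by ring) (by ring) (by ring)

theorem tendsto (hl : l ≤ 𝓝 0) (H : Tay l h a b c) : Tendsto h l (𝓝 a) := by
  obtain ⟨k, hk, hh⟩ := H
  have hz : Tendsto (fun z : ℂ => z) l (𝓝 0) := hl
  have : Tendsto (fun z => a + b * z + c * z ^ 2 + z ^ 2 * k z) l (𝓝 a) := by
    simpa using (((tendsto_const_nhds (x := a)).add (hz.const_mul b)).add
      ((hz.pow 2).const_mul c)).add ((hz.pow 2).mul hk)
  exact this.congr' (hh.mono fun z hz => hz.symm)

theorem comp {l' : Filter ℂ} (hl : l ≤ 𝓝 0) {F : ℂ → ℂ} {A B C : ℂ} (HF : Tay l' F A B C)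
    (H : Tay l h 0 b c) (ht : Tendsto h l l') :
    Tay l (fun z => F (h z)) A (B * b) (B * c + C * b ^ 2) := by
  have H2 := ((const l A).add (H.smul hl B)).add ((H.mul hl H).smul hl C)
  obtain ⟨K, hK, hF⟩ := HF
  obtain ⟨k2, hk2, hh2⟩ := H2
  obtain ⟨k, hk, hh⟩ := H
  have hz : Tendsto (fun z : ℂ => z) l (𝓝 0) := hl
  refine ⟨fun z => k2 z + (b + c * z + z * k z) ^ 2 * K (h z), ?_, ?_⟩
  · have h1 : Tendsto (fun z => b + c * z + z * k z) l (𝓝 b) := by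
      simpa using ((tendsto_const_nhds (x := b)).add (hz.const_mul c)).add (hz.mul hk)
    simpa using hk2.add ((h1.pow 2).mul (hK.comp ht))
  · filter_upwards [hh, hh2, ht.eventually hF] with z h1 h2 h3
    rw [h3]
    have : h z ^ 2 * K (h z) = z ^ 2 * (b + c * z + z * k z) ^ 2 * K (h z) := by
      congr 1; rw [h1]; ring
    linear_combination h2 + this

theorem unique (H : Tay (𝓝[≠] 0) h a b c) (H' : Tay (𝓝[≠] 0) h a' b' c') :
    a = a' ∧ b = b' ∧ c = c' := by
  have hl : 𝓝[≠] (0 : ℂ) ≤ 𝓝 0 := nhdsWithin_le_nhds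
  have hz : Tendsto (fun z : ℂ => z) (𝓝[≠] 0) (𝓝 0) := hl
  have e1 : a = a' := tendsto_nhds_unique (H.tendsto hl) (H'.tendsto hl)
  subst e1
  obtain ⟨k, hk, hh⟩ := H
  obtain ⟨k', hk', hh'⟩ := H'
  have ne : ∀ᶠ z : ℂ in 𝓝[≠] 0, z ≠ 0 := eventually_mem_nhdsWithin
  have e2 : b = b' := by
    have t1 : Tendsto (fun z => b + c * z + z * k z) (𝓝[≠] 0) (𝓝 b) := by
      simpa using ((tendsto_const_nhds (x := b)).add (hz.const_mul c)).add (hz.mul hk)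
    have t2 : Tendsto (fun z => b' + c' * z + z * k' z) (𝓝[≠] 0) (𝓝 b') := by
      simpa using ((tendsto_const_nhds (x := b')).add (hz.const_mul c')).add (hz.mul hk')
    refine tendsto_nhds_unique (t1.congr' ?_) t2
    filter_upwards [hh, hh', ne] with z h1 h2 h3
    apply mul_left_cancel₀ h3
    linear_combination h2 - h1
  subst e2
  refine ⟨rfl, rfl, ?_⟩
  have t1 : Tendsto (fun z => c + k z) (𝓝[≠] 0) (𝓝 c) := by
    simpa using (tendsto_const_nhds (x := c)).add hk
  have t2 : Tendsto (fun z => c' + k' z) (𝓝[≠] 0) (𝓝 c') := by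
    simpa using (tendsto_const_nhds (x := c')).add hk'
  refine tendsto_nhds_unique (t1.congr' ?_) t2
  filter_upwards [hh, hh', ne] with z h1 h2 h3
  apply mul_left_cancel₀ (pow_ne_zero 2 h3)
  linear_combination h2 - h1

theorem of_series {f : ℂ → ℂ} {t : ℕ → ℂ}
    (H : HasFPowerSeriesAt f (FormalMultilinearSeries.ofScalars ℂ t) 0) :
    Tay (𝓝 0) f (t 0) (t 1) (t 2) := by
  have h3 := H.isBigO_sub_partialSum_pow 3
  refine ⟨fun z => (f z - (t 0 + t 1 * z + t 2 * z ^ 2)) / z ^ 2, ?_, ?_⟩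
  · have h4 : (fun z => f z - (t 0 + t 1 * z + t 2 * z ^ 2)) =O[𝓝 0] fun z : ℂ => z ^ 3 := by
      refine (h3.congr_left ?_).trans ?_
      · intro z
        simp [FormalMultilinearSeries.partialSum, Finset.sum_range_succ]
        ring
      · exact Asymptotics.isBigO_of_le _ (by intro z; simp)
    have h5 : (fun z => (f z - (t 0 + t 1 * z + t 2 * z ^ 2)) / z ^ 2)
        =O[𝓝 0] fun z : ℂ => z := by
      rw [Asymptotics.isBigO_iff] at h4 ⊢
      obtain ⟨C, hC⟩ := h4
      refine ⟨C, hC.mono fun z hz => ?_⟩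
      by_cases h0 : z = 0
      · simp [h0]
      · have : 0 < ‖z‖ := norm_pos_iff.2 h0
        rw [norm_div, norm_pow, div_le_iff₀ (by positivity)]
        rw [norm_pow] at hz
        linarith
    exact h5.trans_tendsto tendsto_id
  · have h00 : f 0 = t 0 := by
      have := H.coeff_zero ![]
      simpa [FormalMultilinearSeries.ofScalars] using this.symm
    refine Eventually.of_forall fun z => ?_
    by_cases h0 : z = 0
    · simp [h0, h00]
    · field_simp; ring

theorem of_tsum {t : ℕ → ℂ} {r : ℂ} (hr : r ≠ 0) (hs : Summable fun n => t n * r ^ n) :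
    Tay (𝓝 0) (fun z => ∑' n, t n * z ^ n) (t 0) (t 1) (t 2) := by
  apply of_series
  have hrad : (‖r‖₊ : ENNReal) ≤ (FormalMultilinearSeries.ofScalars ℂ t).radius := by
    apply FormalMultilinearSeries.le_radius_of_summable
    simpa [FormalMultilinearSeries.ofScalars_norm] using hs.norm
  have := (FormalMultilinearSeries.ofScalars ℂ t).hasFPowerSeriesOnBall
    (lt_of_lt_of_le (by simpa using hr) hrad)
  refine this.hasFPowerSeriesAt.congr (Eventually.of_forall fun z => ?_)
  simp [FormalMultilinearSeries.sum, mul_comm]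

theorem cpow (hl : l ≤ 𝓝 0) (H : Tay l h 1 b c) (s : ℂ) :
    Tay l (fun z => h z ^ s) 1 (s * b) (s * c + s * (s - 1) / 2 * b ^ 2) := by
  have h1 : Tay (𝓝 0) (fun x : ℂ => (1 + x) ^ s) 1 s (s * (s - 1) / 2) := by
    have := of_series (t := fun n => Ring.choose s n) (Complex.one_add_cpow_hasFPowerSeriesAt_zero (a := s))
    refine this.coe (by simp) (by simp) ?_
    have h2 := Ring.descPochhammer_eq_factorial_smul_choose s 2
    simp [descPochhammer_succ_right, Polynomial.smeval_mul, Polynomial.smeval_sub] at h2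
    linear_combination h2 / 2
  have h2 : Tay l (fun z => -1 + h z) 0 b c :=
    ((const l (-1)).add H).coe (by ring) (by ring) (by ring)
  have := h1.comp hl h2 (h2.tendsto hl)
  exact this.congr (by simp)

/-- shift -/
theorem of_tsum_div {t : ℕ → ℂ} {r : ℂ} (hr : r ≠ 0) (hs : Summable fun n => t n * r ^ n)
    (h0 : t 0 = 0) :
    ∃ j : ℂ → ℂ, Tay (𝓝 0) j (t 1) (t 2) (t 3) ∧ ∀ z, ‖z‖ ≤ ‖r‖ → ∑' n, t n * z ^ n = z * j z := by
  refine ⟨fun z => ∑' n, t (n + 1) * z ^ n, of_tsum hr ?_, ?_⟩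
  · have := ((summable_nat_add_iff 1).2 hs).mul_left r⁻¹
    refine this.congr fun n => ?_
    field_simp
    ring
  · intro z hz
    have hs' : Summable fun n => t n * z ^ n := by
      refine Summable.of_norm_bounded hs.norm fun n => ?_
      rw [norm_mul, norm_mul, norm_pow, norm_pow]
      gcongr
    rw [hs'.tsum_eq_zero_add, h0, ← tsum_mul_left]
    simp only [zero_mul, zero_add]
    congr 1; ext n; ring

end Tay

section Helpers

open Filter Topology

theorem symQ_lt_bounds {q x y : ℝ} (hq0 : 0 < q) (hq1 : q < 1) (hx : 0 < x) (hxy : x ≤ y) :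
    0 < symQ q x ∧ symQ q x ≤ symQ q y := by
  have hd : q - q⁻¹ < 0 := by
    have : 1 < q⁻¹ := (one_lt_inv₀ hq0).2 hq1
    linarith
  unfold symQ
  simp only [Real.rpow_eq_pow]
  constructor
  · apply div_pos_of_neg_of_neg _ hd
    have : q ^ x < q ^ (-x) := Real.rpow_lt_rpow_of_exponent_gt hq0 hq1 (by linarith)
    linarith
  · rw [div_le_div_right_of_neg hd]
    have h1 : q ^ y ≤ q ^ x := Real.rpow_le_rpow_of_exponent_ge hq0 hq1.le hxy
    have h2 : q ^ (-x) ≤ q ^ (-y) := Real.rpow_le_rpow_of_exponent_ge hq0 hq1.le (by linarith)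
    linarith

theorem symQ_nat {q : ℝ} (n : ℕ) :
    ((symQ q n : ℝ) : ℂ) = ((q : ℂ) ^ n - (q : ℂ)⁻¹ ^ n) / ((q : ℂ) - (q : ℂ)⁻¹) := by
  unfold symQ
  simp only [Real.rpow_eq_pow]
  rw [Real.rpow_natCast, Real.rpow_neg_natCast]
  push_cast
  simp

theorem Lcoef_bounds {q η : ℝ} (hq0 : 0 < q) (hq1 : q < 1) (hη : -1 < η) (n : ℕ) (hn : 1 ≤ n) :
    0 ≤ Lcoef q η n ∧ Lcoef q η n ≤ 1 := by
  have hn' : (1 : ℝ) ≤ n := by exact_mod_cast hn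
  obtain ⟨h1, h2⟩ := symQ_lt_bounds (x := 1 + η) (y := n + η) hq0 hq1 (by linarith) (by linarith)
  unfold Lcoef
  exact ⟨div_nonneg h1.le (h1.le.trans h2), div_le_one_of_le₀ h2 (h1.le.trans h2)⟩

theorem Lcoef_one {q η : ℝ} (hq0 : 0 < q) (hq1 : q < 1) (hη : -1 < η) : Lcoef q η 1 = 1 := by
  obtain ⟨h1, -⟩ := symQ_lt_bounds (x := 1 + η) (y := 1 + η) hq0 hq1 (by linarith) le_rfl
  unfold Lcoef
  rw [Nat.cast_one, div_self h1.ne']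

theorem exists_ne_of_eventually {p : ℂ → Prop} (h : ∀ᶠ z in 𝓝 (0 : ℂ), p z) :
    ∃ r : ℂ, r ≠ 0 ∧ p r := by
  have h1 : ∀ᶠ z in 𝓝[≠] (0 : ℂ), p z := h.filter_mono nhdsWithin_le_nhds
  have h2 : ∀ᶠ z in 𝓝[≠] (0 : ℂ), z ≠ 0 := eventually_mem_nhdsWithin
  exact (h2.and h1).exists

/-- the analytic `h`, with `h 0 = 0`. -/
theorem taylor_summable {h : ℂ → ℂ} (hh : AnalyticAt ℂ h 0) :
    ∀ᶠ z in 𝓝 (0 : ℂ), HasSum (fun n => taylorCoeff h n * z ^ n) (h z) := by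
  filter_upwards [hh.hasFPowerSeriesAt.eventually_hasSum] with z hz
  simpa [taylorCoeff, FormalMultilinearSeries.ofScalars, mul_comm] using hz

theorem eventually_norm_le {r : ℂ} (hr : r ≠ 0) : ∀ᶠ z in 𝓝 (0 : ℂ), ‖z‖ ≤ ‖r‖ := by
  filter_upwards [Metric.ball_mem_nhds (0 : ℂ) (norm_pos_iff.2 hr)] with z hz
  simpa using (mem_ball_zero_iff.1 hz).le

theorem taylor_div {h : ℂ → ℂ} (hh : AnalyticAt ℂ h 0) (h0 : h 0 = 0) :
    ∃ j : ℂ → ℂ, Tay (𝓝 0) j (taylorCoeff h 1) (taylorCoeff h 2) (taylorCoeff h 3) ∧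
      ∀ᶠ z in 𝓝 0, h z = z * j z := by
  obtain ⟨r, hr, hs⟩ := exists_ne_of_eventually (taylor_summable hh)
  obtain ⟨j, hj, e⟩ := Tay.of_tsum_div hr hs.summable (by simp [taylorCoeff, h0])
  refine ⟨j, hj, ?_⟩
  filter_upwards [eventually_norm_le hr, taylor_summable hh] with z h1 h2
  rw [← e z h1, h2.tsum_eq]

theorem Jop_div {q η : ℝ} (hq0 : 0 < q) (hq1 : q < 1) (hη : -1 < η)
    {h : ℂ → ℂ} (hh : AnalyticAt ℂ h 0) (h0 : h 0 = 0) :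
    ∃ j : ℂ → ℂ, Tay (𝓝 0) j (taylorCoeff h 1) (Lcoef q η 2 * taylorCoeff h 2)
      (Lcoef q η 3 * taylorCoeff h 3) ∧ ∀ᶠ z in 𝓝 0, Jop q η h z = z * j z := by
  obtain ⟨r, hr, hs⟩ := exists_ne_of_eventually (taylor_summable hh)
  have t0 : taylorCoeff h 0 = 0 := by simp [taylorCoeff, h0]
  have hs' : Summable fun n => ((Lcoef q η n : ℂ) * taylorCoeff h n) * r ^ n := by
    refine Summable.of_norm_bounded hs.summable.norm fun n => ?_
    rcases Nat.eq_zero_or_pos n with rfl | hn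
    · simp [t0]
    · obtain ⟨h1, h2⟩ := Lcoef_bounds hq0 hq1 hη n hn
      rw [mul_assoc, norm_mul, Complex.norm_real, Real.norm_of_nonneg h1]
      exact mul_le_of_le_one_left (norm_nonneg _) h2
  obtain ⟨j, hj, e⟩ := Tay.of_tsum_div hr hs' (by simp [t0])
  refine ⟨j, hj.coe (by simp [Lcoef_one hq0 hq1 hη]) rfl rfl, ?_⟩
  filter_upwards [eventually_norm_le hr] with z h1
  rw [← e z h1, Jop]

theorem tendsto_scale {s : ℂ} (hs : s ≠ 0) :
    Tendsto (fun z : ℂ => s * z) (𝓝[≠] 0) (𝓝[≠] 0) := by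
  apply tendsto_nhdsWithin_of_tendsto_nhds_of_eventually_within
  · exact (Continuous.tendsto' (by fun_prop) _ _ (by simp)).mono_left nhdsWithin_le_nhds
  · filter_upwards [eventually_mem_nhdsWithin] with z hz
    exact mul_ne_zero hs hz

theorem Tay.scale {h : ℂ → ℂ} {a b c : ℂ} (H : Tay (𝓝[≠] 0) h a b c) {s : ℂ} (hs : s ≠ 0) :
    Tay (𝓝[≠] 0) (fun z => h (s * z)) a (b * s) (c * s ^ 2) :=
  (H.comp nhdsWithin_le_nhds (Tay.lin _ s) (tendsto_scale hs)).coe rfl rfl (by ring)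

theorem Tay.Dq {q : ℝ} (hq0 : 0 < q) (hq1 : q < 1) {H h : ℂ → ℂ} {a b c : ℂ}
    (hh : Tay (𝓝[≠] 0) h a b c) (e : ∀ᶠ z in 𝓝[≠] 0, H z = z * h z) :
    Tay (𝓝[≠] 0) (Dq q H) a (symQ q 2 * b) (symQ q 3 * c) := by
  have hl : 𝓝[≠] (0 : ℂ) ≤ 𝓝 0 := nhdsWithin_le_nhds
  have hq : (q : ℂ) ≠ 0 := by exact_mod_cast hq0.ne'
  have hqi : (q : ℂ)⁻¹ ≠ 0 := inv_ne_zero hq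
  have hd : (q : ℂ) - (q : ℂ)⁻¹ ≠ 0 := by
    have : q - q⁻¹ ≠ 0 := by
      have : 1 < q⁻¹ := (one_lt_inv₀ hq0).2 hq1
      linarith
    exact_mod_cast this
  have := ((hh.scale hq).smul hl (q / ((q : ℂ) - (q : ℂ)⁻¹))).add
    ((hh.scale hqi).smul hl (-(q : ℂ)⁻¹ / ((q : ℂ) - (q : ℂ)⁻¹)))
  have e2 := symQ_nat (q := q) 2
  have e3 := symQ_nat (q := q) 3
  push_cast at e2 e3
  refine (this.coe ?_ ?_ ?_).congr ?_
  · rw [← add_mul, ← add_div, ← sub_eq_add_neg, div_self hd, one_mul]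
  · rw [e2]; ring
  · rw [e3]; ring
  · filter_upwards [eventually_mem_nhdsWithin, (tendsto_scale hq).eventually e,
      (tendsto_scale hqi).eventually e] with z hz h1 h2
    have hz : z ≠ 0 := hz
    rw [_root_.Dq, if_neg hz, h1, div_eq_inv_mul z, h2]
    generalize (q : ℂ) - (q : ℂ)⁻¹ = D at hd ⊢
    rw [div_eq_iff (mul_ne_zero hd hz)]
    generalize h ((q : ℂ)⁻¹ * z) = X
    generalize h ((q : ℂ) * z) = Y
    field_simp
    ring

theorem Tay.Phi {q η lam mu : ℝ} (hq0 : 0 < q) (hq1 : q < 1) (hη : -1 < η)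
    {h : ℂ → ℂ} (hh : AnalyticAt ℂ h 0) (h0 : h 0 = 0) (t1 : taylorCoeff h 1 = 1) :
    Tay (𝓝[≠] 0) (Phi q η lam mu h) 1
      (lam * M2v q mu * symQ q 2 * Lcoef q η 2 * taylorCoeff h 2)
      ((lam * symQ q 3 - 1) * M3v q mu * Lcoef q η 3 * taylorCoeff h 3 +
        1 / 2 * lam * (lam * M2v q mu ^ 2 - N2v q mu) * symQ q 2 ^ 2 * Lcoef q η 2 ^ 2 *
          taylorCoeff h 2 ^ 2) := by
  have hl : 𝓝[≠] (0 : ℂ) ≤ 𝓝 0 := nhdsWithin_le_nhds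
  obtain ⟨j, hj, e⟩ := Jop_div hq0 hq1 hη hh h0
  rw [t1] at hj
  have hj := hj.mono hl
  have e := e.filter_mono hl
  set J := Jop q η h with hJ
  have D1 := hj.Dq hq0 hq1 e
  have D2 := D1.Dq (H := fun ζ => ζ * _root_.Dq q J ζ) hq0 hq1 (Eventually.of_forall fun _ => rfl)
  have S := hj.add (hj.scale (s := -1) (by simp))
  have eS : ∀ᶠ z in 𝓝[≠] (0 : ℂ), J z - J (-z) = z * (j z + j (-1 * z)) := by
    filter_upwards [e, (tendsto_scale (s := -1) (by simp)).eventually e] with z h1 h2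
    rw [← neg_one_mul z, h1, h2]; ring
  have D3 := S.Dq (H := fun ζ => J ζ - J (-ζ)) hq0 hq1 eS
  have I1 := ((S.smul hl (1 / 2)).coe (a' := 1) (by ring) rfl rfl).cpow hl (-1)
  have I2 := ((D3.smul hl (1 / 2)).coe (a' := 1) (by ring) rfl rfl).cpow hl (-1)
  have P := (((D1.cpow hl lam).mul hl I1).coe (a' := 1) (by ring) rfl rfl).cpow hl mu
  have Q := (((D2.cpow hl lam).mul hl I2).coe (a' := 1) (by ring) rfl rfl).cpow hl ((1 - mu : ℝ) : ℂ)
  refine ((P.mul hl Q).coe ?_ ?_ ?_).congr ?_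
  · ring
  · simp only [M2v]; push_cast; ring
  · simp only [M2v, M3v, N2v]; push_cast; ring
  · filter_upwards [eventually_mem_nhdsWithin, eS] with z hz h1
    have hz : z ≠ 0 := hz
    simp only [_root_.Phi, ← hJ, h1, cpow_neg_one]
    congr 2
    · rw [mul_assoc, mul_left_comm, mul_div_mul_left _ _ hz, mul_inv, div_eq_mul_inv]; ring
    · rw [mul_inv, div_eq_mul_inv]; ring

theorem summable_of_tsum_ne {t : ℕ → ℂ} {z : ℂ} (h : ∑' n, t n * z ^ n ≠ 0) :
    Summable fun n => t n * z ^ n := by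
  by_contra hn
  exact h (tsum_eq_zero_of_not_summable hn)

theorem half_mem : (1 / 2 : ℂ) ∈ ball (0 : ℂ) 1 := by
  rw [mem_ball_zero_iff]; norm_num

theorem ev_ball : ∀ᶠ z in 𝓝 (0 : ℂ), z ∈ ball (0 : ℂ) 1 := Metric.ball_mem_nhds 0 one_pos

theorem Tay.schwarz {φ u : ℂ → ℂ} {E c : ℕ → ℂ}
    (hφre : ∀ z ∈ ball (0 : ℂ) 1, 0 < (φ z).re)
    (hφE : ∀ z ∈ ball (0 : ℂ) 1, φ z = ∑' n, E n * z ^ n)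
    (hu : IsSchwarz u) (hc0 : c 0 = 1)
    (hc : ∀ z ∈ ball (0 : ℂ) 1, (1 + u z) / (1 - u z) = ∑' n, c n * z ^ n) :
    Tay (𝓝[≠] 0) (fun z => φ (u z)) (E 0) (E 1 * c 1 / 2)
      (E 1 * (c 2 / 2 - c 1 ^ 2 / 4) + E 2 * c 1 ^ 2 / 4) := by
  have hl : 𝓝[≠] (0 : ℂ) ≤ 𝓝 0 := nhdsWithin_le_nhds
  obtain ⟨hua, hu0, hub⟩ := hu
  have hne : ∀ z ∈ ball (0 : ℂ) 1, 1 + u z ≠ 0 ∧ 1 - u z ≠ 0 := by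
    intro z hz
    have h1 := mem_ball_zero_iff.1 (hub z hz)
    constructor
    · intro h
      have : u z = -1 := by linear_combination h
      rw [this] at h1; norm_num at h1
    · intro h
      have : u z = 1 := by linear_combination -h
      rw [this] at h1; norm_num at h1
  have Tφ : Tay (𝓝 0) φ (E 0) (E 1) (E 2) := by
    refine (Tay.of_tsum (r := 1 / 2) (by norm_num) (summable_of_tsum_ne ?_)).congr
      (ev_ball.mono hφE)
    rw [← hφE _ half_mem]
    intro h
    have := hφre _ half_mem
    rw [h] at this; simp at this
  have Tp : Tay (𝓝 0) (fun z => (1 + u z) / (1 - u z)) 1 (c 1) (c 2) := by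
    refine ((Tay.of_tsum (r := 1 / 2) (by norm_num) (summable_of_tsum_ne ?_)).congr
      (ev_ball.mono hc)).coe hc0.symm rfl rfl
    rw [← hc _ half_mem]
    exact div_ne_zero (hne _ half_mem).1 (hne _ half_mem).2
  have Tu : Tay (𝓝 0) u 0 (taylorCoeff u 1) (taylorCoeff u 2) :=
    (Tay.of_series (t := taylorCoeff u) (hua 0 (by simp)).hasFPowerSeriesAt).coe
      (by simp [taylorCoeff, hu0]) rfl rfl
  have A := ((Tay.const _ 1).add Tu).mono hl
  have B := (Tp.mul le_rfl ((Tay.const _ 1).add (Tu.smul le_rfl (-1)))).mono hl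
  obtain ⟨-, e1, e2⟩ := A.unique (B.congr (by
    filter_upwards [ev_ball.filter_mono hl] with z hz
    have := (hne z hz).2
    rw [show (1 : ℂ) + -1 * u z = 1 - u z by ring, div_mul_cancel₀ _ this]))
  have f1 : taylorCoeff u 1 = c 1 / 2 := by linear_combination e1 / 2
  have f2 : taylorCoeff u 2 = c 2 / 2 - c 1 ^ 2 / 4 := by
    rw [f1] at e2; linear_combination e2 / 2
  rw [f1, f2] at Tu
  have := (Tφ.comp le_rfl Tu (Tu.tendsto le_rfl)).mono hl
  exact this.coe rfl (by ring) (by ring)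

theorem inverse_coeffs {f g : ℂ → ℂ} (hf : AnalyticAt ℂ f 0) (hf0 : f 0 = 0)
    (hf1 : taylorCoeff f 1 = 1) (hg : AnalyticAt ℂ g 0) (hg0 : g 0 = 0)
    (hgf : ∀ᶠ z in 𝓝 (0 : ℂ), g (f z) = z) :
    taylorCoeff g 1 = 1 ∧ taylorCoeff g 2 = -taylorCoeff f 2 ∧
      taylorCoeff g 3 = 2 * taylorCoeff f 2 ^ 2 - taylorCoeff f 3 := by
  have hl : 𝓝[≠] (0 : ℂ) ≤ 𝓝 0 := nhdsWithin_le_nhds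
  obtain ⟨F, hF, eF⟩ := taylor_div hf hf0
  obtain ⟨G, hG, eG⟩ := taylor_div hg hg0
  rw [hf1] at hF
  have Tf : Tay (𝓝 0) f 0 1 (taylorCoeff f 2) :=
    (((Tay.lin _ 1).mul le_rfl hF).coe (by ring) (by ring) (by ring)).congr
      (eF.mono fun z hz => by rw [hz, one_mul])
  have ht := Tf.tendsto le_rfl
  have A := (hF.mul le_rfl (hG.comp le_rfl Tf ht)).mono hl
  obtain ⟨e0, e1, e2⟩ := A.unique ((Tay.const (𝓝[≠] 0) 1).congr (by
    filter_upwards [eF.filter_mono hl, (ht.eventually eG).filter_mono hl, hgf.filter_mono hl,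
      eventually_mem_nhdsWithin] with z h1 h2 h3 hz
    have hz : z ≠ 0 := hz
    apply mul_left_cancel₀ hz
    rw [h3, h1] at h2
    rw [h1]
    linear_combination -h2))
  have g1 : taylorCoeff g 1 = 1 := by linear_combination e0
  rw [g1] at e1 e2
  have g2 : taylorCoeff g 2 = -taylorCoeff f 2 := by linear_combination e1
  refine ⟨g1, g2, ?_⟩
  rw [g2] at e2
  linear_combination e2

end Helpers

theorem a2_sq_relations_bernardi
    (q : ℝ) (hq0 : 0 < q) (hq1 : q < 1)
    (f g : ℂ → ℂ) (a : ℕ → ℂ)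
    (hf : AnalyticOnNhd ℂ f (ball 0 1)) (hf0 : f 0 = 0) (hf'0 : deriv f 0 = 1)
    (hfa : ∀ z ∈ ball (0 : ℂ) 1, f z = ∑' n, a n * z ^ n)
    (ha0 : a 0 = 0) (ha1 : a 1 = 1)
    (hfinj : InjOn f (ball 0 1))
    (hg : AnalyticOnNhd ℂ g (ball 0 1)) (hg0 : g 0 = 0)
    (hginj : InjOn g (ball 0 1))
    (hgf : ∀ᶠ z in nhds (0 : ℂ), g (f z) = z)
    (φ : ℂ → ℂ) (E : ℕ → ℂ) (E1 : ℝ)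
    (hφa : AnalyticOnNhd ℂ φ (ball 0 1)) (hφ0 : φ 0 = 1)
    (hφre : ∀ z ∈ ball (0 : ℂ) 1, 0 < (φ z).re)
    (hφE : ∀ z ∈ ball (0 : ℂ) 1, φ z = ∑' n, E n * z ^ n)
    (hE0 : E 0 = 1) (hE1 : E 1 = (E1 : ℂ)) (hE1pos : 0 < E1)
    (lam : ℝ) (hlam : 1 ≤ lam)
    (η : ℝ) (hη : -1 < η)
    (mu : ℝ) (hmu : 0 ≤ mu)
    (u v : ℂ → ℂ) (hu : IsSchwarz u) (hv : IsSchwarz v)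
    (hsubf : ∀ z ∈ ball (0 : ℂ) 1, z ≠ 0 → Phi q η lam mu f z = φ (u z))
    (hsubg : ∀ w ∈ ball (0 : ℂ) 1, w ≠ 0 → Phi q η lam mu g w = φ (v w))
    (c d : ℕ → ℂ) (hc0 : c 0 = 1) (hd0 : d 0 = 1)
    (hc : ∀ z ∈ ball (0 : ℂ) 1, (1 + u z) / (1 - u z) = ∑' n, c n * z ^ n)
    (hd : ∀ w ∈ ball (0 : ℂ) 1, (1 + v w) / (1 - v w) = ∑' n, d n * w ^ n)
    :
    ((Omegav q η lam mu : ℝ) : ℂ) * a 2 ^ 2 =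
        1 / 2 * (E 2 - (E1 : ℂ)) * c 1 ^ 2 + 1 / 2 * (E1 : ℂ) * (c 2 + d 2) ∧
      Thetav q η lam mu E1 E * a 2 ^ 2 = 1 / 2 * (E1 : ℂ) ^ 3 * (c 2 + d 2) := by
  have hl : nhdsWithin (0 : ℂ) {0}ᶜ ≤ nhds 0 := nhdsWithin_le_nhds
  have hfA : AnalyticAt ℂ f 0 := hf 0 (by simp)
  have hgA : AnalyticAt ℂ g 0 := hg 0 (by simp)
  have tf1 : taylorCoeff f 1 = 1 := by simp [taylorCoeff, hf'0]
  -- identify the coefficient of order two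
  have tf2 : taylorCoeff f 2 = a 2 := by
    have Tf := (Tay.of_series (t := taylorCoeff f) hfA.hasFPowerSeriesAt).mono hl
    have hs : Summable fun n => a n * (1 / 2 : ℂ) ^ n := by
      apply summable_of_tsum_ne
      rw [← hfa _ half_mem]
      intro h
      have := hfinj half_mem (show (0 : ℂ) ∈ ball (0 : ℂ) 1 by simp) (by rw [h, hf0])
      norm_num at this
    have Ta := ((Tay.of_tsum (by norm_num) hs).congr (ev_ball.mono hfa)).mono hl
    exact (Tf.unique Ta).2.2
  obtain ⟨tg1, tg2, tg3⟩ := inverse_coeffs hfA hf0 tf1 hgA hg0 hgf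
  have hb : ∀ᶠ z in nhdsWithin (0 : ℂ) {0}ᶜ, z ∈ ball (0 : ℂ) 1 ∧ z ≠ 0 :=
    (ev_ball.filter_mono hl).and eventually_mem_nhdsWithin
  obtain ⟨-, f1, f2⟩ := (Tay.Phi (lam := lam) (mu := mu) hq0 hq1 hη hfA hf0 tf1).unique
    ((Tay.schwarz hφre hφE hu hc0 hc).congr (hb.mono fun z hz => hsubf z hz.1 hz.2))
  obtain ⟨-, g1, g2⟩ := (Tay.Phi (lam := lam) (mu := mu) hq0 hq1 hη hgA hg0 tg1).unique
    ((Tay.schwarz hφre hφE hv hd0 hd).congr (hb.mono fun z hz => hsubg z hz.1 hz.2))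
  rw [tg2, tf2] at g1
  rw [tg3, tg2, tf2] at g2
  rw [tf2] at f1 f2
  rw [hE1] at f1 f2 g1 g2
  have hE : (E1 : ℂ) ≠ 0 := by exact_mod_cast hE1pos.ne'
  have hd1 : d 1 = -c 1 := by
    apply mul_left_cancel₀ hE
    linear_combination -2 * f1 - 2 * g1
  rw [hd1] at g2
  have main : ((Omegav q η lam mu : ℝ) : ℂ) * a 2 ^ 2 =
        1 / 2 * (E 2 - (E1 : ℂ)) * c 1 ^ 2 + 1 / 2 * (E1 : ℂ) * (c 2 + d 2) := by
    simp only [Omegav]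
    push_cast
    linear_combination f2 + g2
  refine ⟨main, ?_⟩
  have hsq : (E1 : ℂ) ^ 2 * c 1 ^ 2 =
      4 * (lam * M2v q mu * symQ q 2 * Lcoef q η 2 * a 2) ^ 2 := by
    rw [f1]; ring
  simp only [Omegav] at main
  simp only [Thetav]
  push_cast at main ⊢
  linear_combination (E1 : ℂ) ^ 2 * main + 1 / 2 * (E 2 - (E1 : ℂ)) * hsq
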